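/- Let G > 0 and ε > 0. There exists a strategy for one-dimensional online linear optimization — a family of functions A_n : [−G,G]^{n−1} → ℝ for n ≥ 1, where the n-th prediction is x_n = A_n(c_1,…,c_{n−1}) — such that for every time horizon T ∈ ℕ₊, every gradient sequence c_1,…,c_T ∈ [−G,G], and every comparator u ∈ ℝ: Σ_{t=1}^T c_t (x_t − u) ≤ √(G² + G Σ_{t=1}^T |c_t|) · [2ε + 2√2 |u| √(log(1 + |u|/(√2 ε))) + 4√2 |u|]. -/

import Mathlib

open scoped Classical

noncomputable section

/-- The Haar vector `h^(s,l)` in `ℝ^(2^S)` (1-based math indices mapped to 0-based `Fin`). -/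
def haarVec (S s l : ℕ) : Fin (2 ^ S) → ℝ := fun i =>
  if 2 ^ s * (l - 1) ≤ (i : ℕ) ∧ (i : ℕ) < 2 ^ s * (l - 1) + 2 ^ (s - 1) then 1
  else if 2 ^ s * (l - 1) + 2 ^ (s - 1) ≤ (i : ℕ) ∧ (i : ℕ) < 2 ^ s * l then -1
  else 0

/-- The Haar collection ℋ: the all-ones vector together with all `h^(s,l)`,
`s ∈ [1,S]`, `l ∈ [1, 2^(S-s)]`. -/
def haarSet (S : ℕ) : Set (Fin (2 ^ S) → ℝ) :=
  {fun _ => (1 : ℝ)} ∪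
    {v | ∃ s l : ℕ, 1 ≤ s ∧ s ≤ S ∧ 1 ≤ l ∧ l ≤ 2 ^ (S - s) ∧ v = haarVec S s l}

/-- Outer product of two vectors, as a matrix. -/
def outer {n : ℕ} (x y : Fin n → ℝ) : Matrix (Fin n) (Fin n) ℝ :=
  Matrix.of fun i j => x i * y j

/-- Frobenius inner product of two square matrices. -/
def frob {n : ℕ} (A B : Matrix (Fin n) (Fin n) ℝ) : ℝ := ∑ i, ∑ j, A i j * B i j

/-- The `j`-th canonical basis vector `e^(j)`. -/
def eVec {n : ℕ} (j : Fin n) : Fin n → ℝ := fun k => if k = j then 1 else 0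

/-- Right stochastic matrix: nonnegative entries, each row sums to 1. -/
def IsStochastic {n : ℕ} (M : Matrix (Fin n) (Fin n) ℝ) : Prop :=
  (∀ i j, 0 ≤ M i j) ∧ ∀ i, ∑ j, M i j = 1

/-- Membership in the probability simplex Δ(n). -/
def InSimplex {n : ℕ} (p : Fin n → ℝ) : Prop := (∀ i, 0 ≤ p i) ∧ ∑ i, p i = 1

/-- Action of a (stochastic) matrix on a distribution: `(φ(p))_j = Σ_i p_i φ_{i,j}`. -/
def act {n : ℕ} (M : Matrix (Fin n) (Fin n) ℝ) (p : Fin n → ℝ) : Fin n → ℝ :=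
  fun j => ∑ i, p i * M i j

/-- `Σ_{i=1}^{n-1} 1[M_i ≠ M_{i+1}]`: the number of consecutive-row changes of `M`. -/
def rowSwitch {n : ℕ} (M : Matrix (Fin n) (Fin n) ℝ) : ℕ :=
  (Finset.univ.filter fun i : Fin n =>
    ∃ h : (i : ℕ) + 1 < n, M i ≠ M ⟨(i : ℕ) + 1, h⟩).card

/-- Uniformity `d^unif_φ`: the frequency of the most frequent row of `φ`. -/
def dUnif {n : ℕ} (M : Matrix (Fin n) (Fin n) ℝ) : ℕ :=
  Finset.univ.sup fun i : Fin n => (Finset.univ.filter fun k : Fin n => M k = M i).card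

/-- Degree of self-map `d^self_φ`: the number of rows `i` with `φ_i = e^(i)`. -/
def dSelf {n : ℕ} (M : Matrix (Fin n) (Fin n) ℝ) : ℕ :=
  (Finset.univ.filter fun i : Fin n => M i = eVec i).card

/-!
Normalise to `G = 1`, and let `V = 1 + ∑ |cᵢ|` and `S = -∑ cᵢ`. For a function `Φ` that is jointly
convex in `(V, S)` and satisfies `(Φ(V+1, S+1) + Φ(V+1, S-1)) / 2 ≤ Φ(V, S)`, playing the discrete
derivative `(Φ(V+1, S+1) - Φ(V+1, S-1)) / 2` pays for the growth of `Φ`: convexity bounds `Φ` after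
a gradient `c` by the chord between `c = 0` and `c = ±1`, and the averaging inequality bounds it at
`c = ±1`. The regret against `u` is then at most `Φ(1, 0) + u S - Φ(V, S)`.

Both requirements hold for `cosh (η S) exp (-η² V / 2)`, for every `η`. Integrating
`(cosh (η S) exp (-η² V / 2) - 1) / η²` over all learning rates `η` gives a potential of the form
`√V F(S / √V)`, so no logarithm of `V` appears, and `F(z)` grows faster than `exp (z² / 4)`, which
yields the `√log` dependence on `u`.
-/

namespace OLO

open Real MeasureTheory Set

section Potential

/-- A potential for one-dimensional online linear optimization with gradients in `[-1, 1]`, as a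
function of `V`, the accumulated absolute gradients, and `S`, the negated sum of the gradients. -/
structure IsPotential (Φ : ℝ → ℝ → ℝ) : Prop where
  convexOn : ConvexOn ℝ {p : ℝ × ℝ | 0 < p.1} fun p ↦ Φ p.1 p.2
  average_le : ∀ {V : ℝ} (S : ℝ), 0 < V → (Φ (V + 1) (S + 1) + Φ (V + 1) (S - 1)) / 2 ≤ Φ V S

/-- The discrete derivative of a potential in `S`, which is the prediction it induces. -/
def discreteDeriv (Φ : ℝ → ℝ → ℝ) (V S : ℝ) : ℝ :=
  (Φ (V + 1) (S + 1) - Φ (V + 1) (S - 1)) / 2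

/-- The strategy induced by a potential `Φ`, where `V` starts at `V₀` and `S` at `0`. -/
def potentialStrategy (Φ : ℝ → ℝ → ℝ) (V₀ : ℝ) (t : ℕ) (history : Fin t → ℝ) : ℝ :=
  discreteDeriv Φ (V₀ + ∑ i, |history i|) (-∑ i, history i)

variable {Φ : ℝ → ℝ → ℝ}

lemma IsPotential.const_mul (hΦ : IsPotential Φ) {k : ℝ} (hk : 0 ≤ k) :
    IsPotential fun V S ↦ k * Φ V S where
  convexOn := hΦ.convexOn.smul hk
  average_le S hV := by
    rw [← mul_add, mul_div_assoc]
    exact mul_le_mul_of_nonneg_left (hΦ.average_le S hV) hk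

lemma IsPotential.chord_le (hΦ : IsPotential Φ) {V a : ℝ} (hV : 0 < V) (ha₀ : 0 ≤ a)
    (ha₁ : a ≤ 1) (S σ : ℝ) :
    Φ (V + a) (S + a * σ) ≤ (1 - a) * Φ V S + a * Φ (V + 1) (S + σ) := by
  have hV' : 0 < V + 1 := by linarith
  have chord := hΦ.convexOn.2 (x := (V, S)) hV (y := (V + 1, S + σ)) hV'
    (sub_nonneg.2 ha₁) ha₀ (by ring)
  have first : (1 - a) * V + a * (V + 1) = V + a := by ring
  have second : (1 - a) * S + a * (S + σ) = S + a * σ := by ring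
  simpa only [Prod.smul_mk, Prod.mk_add_mk, smul_eq_mul, first, second] using chord

lemma IsPotential.step_le (hΦ : IsPotential Φ) {V c : ℝ} (hV : 0 < V) (hc : |c| ≤ 1) (S : ℝ) :
    Φ (V + |c|) (S - c) ≤ Φ V S - c * discreteDeriv Φ V S := by
  have average := mul_le_mul_of_nonneg_left (hΦ.average_le S hV) (abs_nonneg c)
  unfold discreteDeriv
  rcases le_total 0 c with nonneg | nonpos
  · rw [abs_of_nonneg nonneg] at *
    have chord := hΦ.chord_le hV nonneg hc S (-1)
    rw [mul_neg_one, ← sub_eq_add_neg, ← sub_eq_add_neg] at chord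
    linarith
  · rw [abs_of_nonpos nonpos] at *
    have chord := hΦ.chord_le hV (neg_nonneg.2 nonpos) hc S 1
    rw [mul_one, ← sub_eq_add_neg S] at chord
    linarith

lemma IsPotential.sum_mul_discreteDeriv_le (hΦ : IsPotential Φ) {V₀ : ℝ} (hV₀ : 0 < V₀)
    {c : ℕ → ℝ} {T : ℕ} (hc : ∀ t < T, |c t| ≤ 1) :
    ∑ t ∈ Finset.range T, c t * discreteDeriv Φ (V₀ + ∑ i ∈ Finset.range t, |c i|)
        (-∑ i ∈ Finset.range t, c i) ≤
      Φ V₀ 0 - Φ (V₀ + ∑ t ∈ Finset.range T, |c t|) (-∑ t ∈ Finset.range T, c t) := by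
  induction T with
  | zero => simp
  | succ n ih =>
    have hV : 0 < V₀ + ∑ i ∈ Finset.range n, |c i| := by positivity
    have previous := ih fun t ht ↦ hc t (ht.trans n.lt_succ_self)
    have step := hΦ.step_le hV (hc n n.lt_succ_self) (-∑ i ∈ Finset.range n, c i)
    simp only [Finset.sum_range_succ, ← add_assoc, neg_add, ← sub_eq_add_neg]
    linarith

lemma IsPotential.regret_le (hΦ : IsPotential Φ) {V₀ : ℝ} (hV₀ : 0 < V₀) {c : ℕ → ℝ} {T : ℕ}
    (hc : ∀ t < T, |c t| ≤ 1) (u : ℝ) :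
    ∑ t ∈ Finset.range T, c t * (potentialStrategy Φ V₀ t (fun i ↦ c i) - u) ≤
      Φ V₀ 0 + (u * -∑ t ∈ Finset.range T, c t -
        Φ (V₀ + ∑ t ∈ Finset.range T, |c t|) (-∑ t ∈ Finset.range T, c t)) := by
  have reward := hΦ.sum_mul_discreteDeriv_le hV₀ hc
  simp only [potentialStrategy, Fin.sum_univ_eq_sum_range (fun i ↦ |c i|),
    Fin.sum_univ_eq_sum_range c, mul_sub, Finset.sum_sub_distrib, ← Finset.sum_mul]
  linarith

end Potential

section Mixture

lemma cosh_mul_exp_neg_sq_le_one (x : ℝ) : cosh x * exp (-(x ^ 2 / 2)) ≤ 1 := by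
  rw [exp_neg, ← div_eq_mul_inv]
  exact div_le_one_of_le₀ (cosh_le_exp_half_sq x) (exp_nonneg _)

lemma cosh_sub_one_le_sq_mul_cosh (x : ℝ) : cosh x - 1 ≤ x ^ 2 / 2 * cosh x := by
  have tangent := mul_le_mul_of_nonneg_left (one_sub_le_exp_neg (x ^ 2 / 2)) (cosh_pos x).le
  have damped := cosh_mul_exp_neg_sq_le_one x
  linarith

lemma integrable_exp_mul_mul_exp_neg_sq (z : ℝ) :
    Integrable fun η : ℝ ↦ exp (η * z) * exp (-(η ^ 2 / 2)) := by
  have gaussian := integrable_exp_neg_mul_sq (b := 1 / 2) (by norm_num)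
  refine ((gaussian.comp_sub_right z).const_mul (exp (z ^ 2 / 2))).congr (.of_forall fun η ↦ ?_)
  simp only [← exp_add]
  ring_nf

lemma integrable_cosh_mul_exp_neg_sq (z : ℝ) :
    Integrable fun η : ℝ ↦ cosh (η * z) * exp (-(η ^ 2 / 2)) := by
  refine (((integrable_exp_mul_mul_exp_neg_sq z).add
    (integrable_exp_mul_mul_exp_neg_sq (-z))).div_const 2).congr (.of_forall fun η ↦ ?_)
  simp only [Pi.add_apply, cosh_eq, mul_neg]
  ring

/-- The potential with a fixed learning rate `η`, shifted so that weighting it by `η⁻²` leaves it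
integrable in `η`. The junk value at `η = 0` is harmless. -/
def coshKernel (η V S : ℝ) : ℝ := (cosh (η * S) * exp (-(η ^ 2 * V / 2)) - 1) / η ^ 2

/-- The part of `coshKernel η 1 z` that grows with `z`. -/
def coshExcess (z η : ℝ) : ℝ := (cosh (η * z) - 1) * exp (-(η ^ 2 / 2)) / η ^ 2

/-- The negative of `coshKernel η 1 0`. -/
def gaussianDeficit (η : ℝ) : ℝ := (1 - exp (-(η ^ 2 / 2))) / η ^ 2

/-- The mixture of the fixed-rate potentials over all learning rates. -/
def mixturePotential (V S : ℝ) : ℝ := ∫ η, coshKernel η V S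

lemma coshKernel_one (η z : ℝ) : coshKernel η 1 z = coshExcess z η - gaussianDeficit η := by
  unfold coshKernel coshExcess gaussianDeficit
  ring_nf

lemma coshKernel_eq_mul_coshKernel_one {V : ℝ} (hV : 0 < V) (η S : ℝ) :
    coshKernel η V S = V * coshKernel (√V * η) 1 (S / √V) := by
  have argument : √V * η * (S / √V) = η * S := by field_simp
  unfold coshKernel
  rw [argument, mul_pow, sq_sqrt hV.le, mul_one, mul_comm V (η ^ 2)]
  field_simp

lemma convexOn_coshKernel (η : ℝ) :
    ConvexOn ℝ univ fun p : ℝ × ℝ ↦ coshKernel η p.1 p.2 := by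
  have convex_exp (σ : ℝ) : ConvexOn ℝ univ fun p : ℝ × ℝ ↦ exp (σ * p.2 - η ^ 2 / 2 * p.1) := by
    let exponent : ℝ × ℝ →ₗ[ℝ] ℝ := σ • LinearMap.snd ℝ ℝ ℝ - (η ^ 2 / 2) • LinearMap.fst ℝ ℝ ℝ
    exact (convexOn_exp.comp_linearMap exponent).congr fun p _ ↦ by simp [exponent]
  have weight_nonneg : 0 ≤ (2 * η ^ 2)⁻¹ := by positivity
  refine ((((convex_exp η).add (convex_exp (-η))).smul weight_nonneg).add_const
    (-(η ^ 2)⁻¹)).congr fun p _ ↦ ?_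
  simp only [Pi.add_apply, smul_eq_mul, coshKernel, cosh_eq, sub_eq_add_neg, exp_add]
  ring_nf

lemma coshKernel_average_le (η V S : ℝ) :
    (coshKernel η (V + 1) (S + 1) + coshKernel η (V + 1) (S - 1)) / 2 ≤ coshKernel η V S := by
  have factor : (coshKernel η (V + 1) (S + 1) + coshKernel η (V + 1) (S - 1)) / 2 =
      (cosh (η * S) * exp (-(η ^ 2 * V / 2)) * (cosh η * exp (-(η ^ 2 / 2))) - 1) / η ^ 2 := by
    have exponent : -(η ^ 2 * (V + 1) / 2) = -(η ^ 2 * V / 2) + -(η ^ 2 / 2) := by ring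
    rw [coshKernel, coshKernel, exponent, exp_add, mul_add_one, mul_sub_one, cosh_add, cosh_sub]
    ring
  rw [factor]
  refine div_le_div_of_nonneg_right (sub_le_sub_right ?_ 1) (sq_nonneg η)
  exact mul_le_of_le_one_right (by positivity) (cosh_mul_exp_neg_sq_le_one η)

lemma coshExcess_nonneg (z η : ℝ) : 0 ≤ coshExcess z η := by
  have := sub_nonneg.2 (one_le_cosh (η * z))
  unfold coshExcess
  positivity

lemma coshExcess_le (z η : ℝ) :
    coshExcess z η ≤ z ^ 2 / 2 * (cosh (η * z) * exp (-(η ^ 2 / 2))) := by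
  refine div_le_of_le_mul₀ (sq_nonneg η) (by positivity) ?_
  calc (cosh (η * z) - 1) * exp (-(η ^ 2 / 2))
      ≤ (η * z) ^ 2 / 2 * cosh (η * z) * exp (-(η ^ 2 / 2)) := by
        gcongr
        exact cosh_sub_one_le_sq_mul_cosh _
    _ = z ^ 2 / 2 * (cosh (η * z) * exp (-(η ^ 2 / 2))) * η ^ 2 := by ring

lemma integrable_coshExcess (z : ℝ) : Integrable (coshExcess z) := by
  refine ((integrable_cosh_mul_exp_neg_sq z).const_mul (z ^ 2 / 2)).mono'
    (Measurable.aestronglyMeasurable (by unfold coshExcess; fun_prop)) (.of_forall fun η ↦ ?_)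
  rw [norm_of_nonneg (coshExcess_nonneg z η)]
  exact coshExcess_le z η

lemma gaussianDeficit_nonneg (η : ℝ) : 0 ≤ gaussianDeficit η := by
  have : exp (-(η ^ 2 / 2)) ≤ 1 := exp_le_one_iff.2 (neg_nonpos.2 (by positivity))
  exact div_nonneg (sub_nonneg.2 this) (sq_nonneg η)

lemma gaussianDeficit_le (η : ℝ) : gaussianDeficit η ≤ 2 * (1 + η ^ 2)⁻¹ := by
  have tangent := one_sub_le_exp_neg (η ^ 2 / 2)
  have positive := exp_pos (-(η ^ 2 / 2))
  refine div_le_of_le_mul₀ (sq_nonneg η) (by positivity) ?_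
  rw [mul_right_comm, ← div_eq_mul_inv, le_div_iff₀ (by positivity)]
  nlinarith [sq_nonneg η]

lemma integrable_gaussianDeficit : Integrable gaussianDeficit := by
  refine (integrable_inv_one_add_sq.const_mul 2).mono'
    (Measurable.aestronglyMeasurable (by unfold gaussianDeficit; fun_prop)) (.of_forall fun η ↦ ?_)
  rw [norm_of_nonneg (gaussianDeficit_nonneg η)]
  exact gaussianDeficit_le η

lemma integral_gaussianDeficit_le : ∫ η, gaussianDeficit η ≤ 8 :=
  calc ∫ η, gaussianDeficit η ≤ ∫ η : ℝ, 2 * (1 + η ^ 2)⁻¹ :=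
        integral_mono integrable_gaussianDeficit (integrable_inv_one_add_sq.const_mul 2)
          gaussianDeficit_le
    _ = 2 * π := by rw [integral_const_mul, integral_univ_inv_one_add_sq]
    _ ≤ 8 := by linarith [pi_le_four]

lemma integrable_coshKernel {V : ℝ} (hV : 0 < V) (S : ℝ) :
    Integrable fun η ↦ coshKernel η V S := by
  have unit_integrable (z : ℝ) : Integrable fun η ↦ coshKernel η 1 z := by
    simpa only [coshKernel_one] using! (integrable_coshExcess z).sub integrable_gaussianDeficit
  simpa only [coshKernel_eq_mul_coshKernel_one hV] using
    ((unit_integrable (S / √V)).comp_mul_left' (sqrt_pos.2 hV).ne').const_mul V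

lemma isPotential_mixturePotential : IsPotential mixturePotential where
  convexOn := by
    have convex_domain : Convex ℝ {p : ℝ × ℝ | 0 < p.1} :=
      (convex_Ioi 0).linear_preimage (LinearMap.fst ℝ ℝ ℝ)
    exact integral_convexOn_of_integrand_ae convex_domain
      (.of_forall fun η ↦ (convexOn_coshKernel η).subset (subset_univ _) convex_domain)
      fun p hp ↦ integrable_coshKernel hp p.2
  average_le {V} S hV := by
    have integrable_next := integrable_coshKernel (V := V + 1) (by positivity)
    unfold mixturePotential
    rw [← integral_add (integrable_next _) (integrable_next _), ← integral_div]
    exact integral_mono (((integrable_next _).add (integrable_next _)).div_const 2)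
      (integrable_coshKernel hV S) fun η ↦ coshKernel_average_le η V S

lemma mixturePotential_eq_sqrt_mul {V : ℝ} (hV : 0 < V) (S : ℝ) :
    mixturePotential V S = √V * mixturePotential 1 (S / √V) := by
  simp only [mixturePotential, coshKernel_eq_mul_coshKernel_one hV]
  rw [integral_const_mul, Measure.integral_comp_mul_left (fun η ↦ coshKernel η 1 (S / √V)),
    abs_of_pos (by positivity), smul_eq_mul, ← mul_assoc, ← div_eq_mul_inv, div_sqrt]

lemma mixturePotential_abs (V S : ℝ) : mixturePotential V |S| = mixturePotential V S := by
  rcases abs_choice S with h | h <;> simp [mixturePotential, coshKernel, h]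

lemma mixturePotential_zero_nonpos {V : ℝ} (hV : 0 < V) : mixturePotential V 0 ≤ 0 := by
  have at_one : mixturePotential 1 0 ≤ 0 := by
    refine integral_nonpos fun η ↦ ?_
    simpa [coshKernel_one, coshExcess] using gaussianDeficit_nonneg η
  rw [mixturePotential_eq_sqrt_mul hV, zero_div]
  exact mul_nonpos_of_nonneg_of_nonpos (sqrt_nonneg V) at_one

end Mixture

section Growth

lemma integral_coshExcess_sub_le_mixturePotential (z : ℝ) :
    (∫ η, coshExcess z η) - 8 ≤ mixturePotential 1 z := by
  simp only [mixturePotential, coshKernel_one]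
  rw [integral_sub (integrable_coshExcess z) integrable_gaussianDeficit]
  linarith [integral_gaussianDeficit_le]

lemma le_coshExcess {z η : ℝ} (hz : 0 < z) (hη : η ∈ Ioc (z / 2) z) :
    (exp (3 * z ^ 2 / 8) / 2 - 1) / z ^ 2 ≤ coshExcess z η := by
  obtain ⟨lower, upper⟩ := hη
  have hη₀ : 0 < η := by linarith
  have exponent : 3 * z ^ 2 / 8 ≤ η * z + -(η ^ 2 / 2) := by nlinarith
  have gaussian_le_one : exp (-(η ^ 2 / 2)) ≤ 1 := exp_le_one_iff.2 (neg_nonpos.2 (by positivity))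
  have numerator : exp (3 * z ^ 2 / 8) / 2 - 1 ≤ (cosh (η * z) - 1) * exp (-(η ^ 2 / 2)) :=
    calc exp (3 * z ^ 2 / 8) / 2 - 1
        ≤ exp (η * z + -(η ^ 2 / 2)) / 2 - exp (-(η ^ 2 / 2)) := by gcongr
      _ = (exp (η * z) / 2 - 1) * exp (-(η ^ 2 / 2)) := by rw [exp_add]; ring
      _ ≤ (cosh (η * z) - 1) * exp (-(η ^ 2 / 2)) := by
        rw [cosh_eq]
        gcongr
        linarith [exp_pos (-(η * z))]
  have numerator_nonneg : 0 ≤ (cosh (η * z) - 1) * exp (-(η ^ 2 / 2)) :=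
    mul_nonneg (sub_nonneg.2 (one_le_cosh _)) (exp_nonneg _)
  calc (exp (3 * z ^ 2 / 8) / 2 - 1) / z ^ 2
      ≤ (cosh (η * z) - 1) * exp (-(η ^ 2 / 2)) / z ^ 2 := by gcongr
    _ ≤ coshExcess z η := by
        unfold coshExcess
        gcongr

lemma le_integral_coshExcess {z : ℝ} (hz : 0 < z) :
    (exp (3 * z ^ 2 / 8) / 2 - 1) / (2 * z) ≤ ∫ η, coshExcess z η :=
  calc (exp (3 * z ^ 2 / 8) / 2 - 1) / (2 * z)
      = (exp (3 * z ^ 2 / 8) / 2 - 1) / z ^ 2 * volume.real (Ioc (z / 2) z) := by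
        rw [volume_real_Ioc_of_le (by linarith)]
        field_simp
        ring
    _ ≤ ∫ η in Ioc (z / 2) z, coshExcess z η :=
        setIntegral_ge_of_const_le_real measurableSet_Ioc (by simp)
          (fun η hη ↦ le_coshExcess hz hη) (integrable_coshExcess z).integrableOn
    _ ≤ ∫ η, coshExcess z η :=
        setIntegral_le_integral (integrable_coshExcess z) (.of_forall (coshExcess_nonneg z))

lemma hundred_mul_le_exp {x : ℝ} (hx : 8 ≤ x) : 100 * x ≤ exp x := by
  have exp_eight : (800 : ℝ) ≤ exp 8 :=
    calc (800 : ℝ) ≤ 2.7 ^ 8 := by norm_num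
      _ ≤ exp 1 ^ 8 := by gcongr; linarith [exp_one_gt_d9]
      _ = exp 8 := by rw [← exp_nat_mul]; norm_num
  have tangent := add_one_le_exp (x - 8)
  calc 100 * x ≤ 800 * (x - 8 + 1) := by linarith
    _ ≤ exp 8 * exp (x - 8) := by gcongr
    _ = exp x := by rw [← exp_add, add_sub_cancel]

lemma le_mul_exp_sq_of_sqrt_log_le {a v w : ℝ} (ha : 0 < a) (hv : 0 ≤ v)
    (h : √(log (1 + v / a)) ≤ w) : v ≤ a * exp (w ^ 2) := by
  have : 0 ≤ v / a := by positivity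
  have ratio : 1 + v / a ≤ exp (w ^ 2) :=
    (log_le_iff_le_exp (by positivity)).1 (sqrt_le_iff.1 h).2
  rw [← div_le_iff₀' ha]
  linarith

/-- The value of `|S| / √V` beyond which the potential dominates the comparator term `|u| |S|`; the
regret bound is affine in it. -/
def comparatorRadius (ε v : ℝ) : ℝ := 2 * √2 * √(log (1 + v / (√2 * ε))) + 4 * √2

lemma comparatorRadius_pos (ε v : ℝ) : 0 < comparatorRadius ε v := by
  unfold comparatorRadius
  positivity

lemma four_mul_sqrt_two_le_comparatorRadius (ε v : ℝ) : 4 * √2 ≤ comparatorRadius ε v :=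
  le_add_of_nonneg_left (by positivity)

lemma le_mul_exp_of_comparatorRadius_le {ε v z : ℝ} (hε : 0 < ε) (hv : 0 ≤ v)
    (hz : comparatorRadius ε v ≤ z) : v ≤ √2 * ε * exp (z ^ 2 / 8) := by
  have sqrt_log_le : √(log (1 + v / (√2 * ε))) ≤ z / (2 * √2) := by
    rw [le_div_iff₀' (by positivity)]
    unfold comparatorRadius at hz
    linarith [sqrt_nonneg 2]
  have square : (z / (2 * √2)) ^ 2 = z ^ 2 / 8 := by
    rw [div_pow, mul_pow, sq_sqrt zero_le_two]
    norm_num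
  simpa only [square] using le_mul_exp_sq_of_sqrt_log_le (by positivity) hv sqrt_log_le

lemma sqrt_two_mul_exp_mul_le {z : ℝ} (hz : 32 ≤ z ^ 2) :
    8 * √2 * exp (z ^ 2 / 8) * z ^ 2 ≤ exp (3 * z ^ 2 / 8) / 2 - 1 := by
  have exp_quarter := hundred_mul_le_exp (x := z ^ 2 / 4) (by linarith)
  have one_le_exp : 1 ≤ exp (z ^ 2 / 8) := Real.one_le_exp (by positivity)
  have sqrt_two_le : √2 ≤ 3 / 2 := (sqrt_le_left (by norm_num)).2 (by norm_num)
  calc 8 * √2 * exp (z ^ 2 / 8) * z ^ 2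
      ≤ 8 * (3 / 2) * exp (z ^ 2 / 8) * z ^ 2 := by gcongr
    _ ≤ exp (z ^ 2 / 8) * (100 * (z ^ 2 / 4)) / 2 - 1 := by nlinarith
    _ ≤ exp (z ^ 2 / 8) * exp (z ^ 2 / 4) / 2 - 1 := by gcongr
    _ = exp (3 * z ^ 2 / 8) / 2 - 1 := by rw [← exp_add]; ring_nf

lemma mul_le_integral_coshExcess {ε v z : ℝ} (hε : 0 < ε) (hv : 0 ≤ v)
    (hz : comparatorRadius ε v ≤ z) : v * z ≤ ε / 4 * ∫ η, coshExcess z η := by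
  have four_sqrt_two_le := (four_mul_sqrt_two_le_comparatorRadius ε v).trans hz
  have hz₀ : 0 < z := (comparatorRadius_pos ε v).trans_le hz
  have hz_sq : 32 ≤ z ^ 2 :=
    calc (32 : ℝ) = (4 * √2) ^ 2 := by rw [mul_pow, sq_sqrt zero_le_two]; norm_num
      _ ≤ z ^ 2 := by gcongr
  have growth := sqrt_two_mul_exp_mul_le hz_sq
  calc v * z ≤ √2 * ε * exp (z ^ 2 / 8) * z := by
        gcongr
        exact le_mul_exp_of_comparatorRadius_le hε hv hz
    _ = ε / 4 * (8 * √2 * exp (z ^ 2 / 8) * z ^ 2 / (2 * z)) := by field_simp; ring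
    _ ≤ ε / 4 * ((exp (3 * z ^ 2 / 8) / 2 - 1) / (2 * z)) := by gcongr
    _ ≤ ε / 4 * ∫ η, coshExcess z η := by
        gcongr
        exact le_integral_coshExcess hz₀

lemma mul_sub_mixturePotential_one_le {ε v : ℝ} (hε : 0 < ε) (hv : 0 ≤ v) (z : ℝ) :
    v * z - ε / 4 * mixturePotential 1 z ≤ 2 * ε + v * comparatorRadius ε v := by
  have potential_ge := mul_le_mul_of_nonneg_left (integral_coshExcess_sub_le_mixturePotential z)
    (by positivity : 0 ≤ ε / 4)
  rcases le_total z (comparatorRadius ε v) with small | large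
  · have excess_nonneg : 0 ≤ ε / 4 * ∫ η, coshExcess z η :=
      mul_nonneg (by positivity) (integral_nonneg (coshExcess_nonneg z))
    linarith [mul_le_mul_of_nonneg_left small hv]
  · linarith [mul_le_integral_coshExcess hε hv large,
      mul_nonneg hv (comparatorRadius_pos ε v).le]

lemma mul_sub_mixturePotential_le {ε V : ℝ} (hε : 0 < ε) (hV : 0 < V) (u S : ℝ) :
    u * S - ε / 4 * mixturePotential V S ≤ √V * (2 * ε + |u| * comparatorRadius ε |u|) := by
  have normalise : |u| * |S| = √V * (|u| * (|S| / √V)) := by field_simp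
  calc u * S - ε / 4 * mixturePotential V S
      ≤ |u| * |S| - ε / 4 * mixturePotential V |S| := by
        rw [mixturePotential_abs, ← abs_mul]
        gcongr
        exact le_abs_self _
    _ = √V * (|u| * (|S| / √V) - ε / 4 * mixturePotential 1 (|S| / √V)) := by
        rw [mixturePotential_eq_sqrt_mul hV, normalise]
        ring
    _ ≤ √V * (2 * ε + |u| * comparatorRadius ε |u|) := by
        gcongr
        exact mul_sub_mixturePotential_one_le hε (abs_nonneg u) _

end Growth

section Strategy

/-- The strategy for gradients in `[-1, 1]` induced by the mixture potential. The factor `ε / 4`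
makes the potential at least `-2 ε √V`. -/
def mixtureStrategy (ε : ℝ) : (t : ℕ) → (Fin t → ℝ) → ℝ :=
  potentialStrategy (fun V S ↦ ε / 4 * mixturePotential V S) 1

lemma mixtureStrategy_regret_le {ε : ℝ} (hε : 0 < ε) {c : ℕ → ℝ} {T : ℕ}
    (hc : ∀ t < T, |c t| ≤ 1) (u : ℝ) :
    ∑ t ∈ Finset.range T, c t * (mixtureStrategy ε t (fun i ↦ c i) - u) ≤
      √(1 + ∑ t ∈ Finset.range T, |c t|) * (2 * ε + |u| * comparatorRadius ε |u|) := by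
  have hε₄ : 0 ≤ ε / 4 := by positivity
  have initial := mul_nonpos_of_nonneg_of_nonpos hε₄ (mixturePotential_zero_nonpos one_pos)
  have regret := (isPotential_mixturePotential.const_mul hε₄).regret_le one_pos hc u
  have conjugate := mul_sub_mixturePotential_le hε (V := 1 + ∑ t ∈ Finset.range T, |c t|)
    (by positivity) u (-∑ t ∈ Finset.range T, c t)
  unfold mixtureStrategy
  linarith

lemma mul_sqrt_one_add_sum_abs_div {ι : Type*} {G : ℝ} (hG : 0 < G) (s : Finset ι) (c : ι → ℝ) :
    G * √(1 + ∑ i ∈ s, |c i / G|) = √(G ^ 2 + G * ∑ i ∈ s, |c i|) := by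
  have radicand : G ^ 2 + G * ∑ i ∈ s, |c i| = G ^ 2 * (1 + ∑ i ∈ s, |c i / G|) := by
    simp only [abs_div, abs_of_pos hG, ← Finset.sum_div]
    field_simp
  rw [radicand, sqrt_mul (sq_nonneg G), sqrt_sq hG.le]

end Strategy

end OLO

/-- comparator-adaptive 1-D OLO: for any Lipschitz constant `G > 0`
and hyperparameter `ε > 0`, there exists a strategy `A` (where the `t`-th prediction,
for `t = 0, 1, 2, …`, depends only on the previously observed gradients `c_0,…,c_{t-1}`)
such that for every horizon `T ∈ ℕ₊`, every gradient sequence with `|c_t| ≤ G`, and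
every comparator `u ∈ ℝ`, the regret is bounded by
`√(G² + G Σ_t |c_t|) · [2ε + 2√2 |u| √(log(1 + |u|/(√2 ε))) + 4√2 |u|]`. -/
theorem exists_comparator_adaptive_one_d_olo (G ε : ℝ) (hG : 0 < G) (hε : 0 < ε) :
    ∃ A : (t : ℕ) → (Fin t → ℝ) → ℝ,
      ∀ T : ℕ, 0 < T → ∀ c : ℕ → ℝ, (∀ t, t < T → |c t| ≤ G) → ∀ u : ℝ,
        ∑ t ∈ Finset.range T, c t * (A t (fun i : Fin t => c i) - u) ≤
          Real.sqrt (G ^ 2 + G * ∑ t ∈ Finset.range T, |c t|) *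
            (2 * ε + 2 * Real.sqrt 2 * |u| *
                Real.sqrt (Real.log (1 + |u| / (Real.sqrt 2 * ε))) +
              4 * Real.sqrt 2 * |u|) := by
  refine ⟨fun t h ↦ OLO.mixtureStrategy ε t fun i ↦ h i / G, fun T _ c hc u ↦ ?_⟩
  have unit_gradients (t : ℕ) (ht : t < T) : |c t / G| ≤ 1 := by
    rw [abs_div, abs_of_pos hG, div_le_one hG]
    exact hc t ht
  have regret := OLO.mixtureStrategy_regret_le hε unit_gradients u
  calc ∑ t ∈ Finset.range T, c t * (OLO.mixtureStrategy ε t (fun i ↦ c i / G) - u)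
      = G * ∑ t ∈ Finset.range T, c t / G * (OLO.mixtureStrategy ε t (fun i ↦ c i / G) - u) := by
        rw [Finset.mul_sum]
        refine Finset.sum_congr rfl fun t _ ↦ ?_
        rw [← mul_assoc, mul_div_cancel₀ _ hG.ne']
    _ ≤ G * (√(1 + ∑ t ∈ Finset.range T, |c t / G|) *
          (2 * ε + |u| * OLO.comparatorRadius ε |u|)) := by gcongr
    _ = _ := by
        rw [← mul_assoc, OLO.mul_sqrt_one_add_sum_abs_div hG, OLO.comparatorRadius]
        ring
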